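/- For every integer n, the Baumslag–Solitar group B(n+2, n) = ⟨a, t ∣ t a^{n+2} t⁻¹ = a^n⟩ has a subgroup Γ' of index 2 whose abelianization A has no ℤ/2 direct summand, i.e. every x ∈ A with 2x = 0 satisfies x = 2y for some y ∈ A. -/

import Mathlib

/-- The relator `t a^m t⁻¹ a^{-n}` of the Baumslag–Solitar group, in the free group
on two generators, where `a` is `FreeGroup.of 0` and `t` is `FreeGroup.of 1`. -/
def BSRel (m n : ℤ) : FreeGroup (Fin 2) :=
  FreeGroup.of 1 * FreeGroup.of 0 ^ m * (FreeGroup.of 1)⁻¹ * FreeGroup.of 0 ^ (-n)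

/-- The Baumslag–Solitar group `B(m,n) = ⟨a, t ∣ t a^m t⁻¹ = a^n⟩`. -/
abbrev BS (m n : ℤ) : Type :=
  PresentedGroup ({BSRel m n} : Set (FreeGroup (Fin 2)))

/-!
Let `m ≡ n + 2 (mod 4)`, and let `Γ` be the preimage of the rotations under a homomorphism from
`B(m, n)` to a dihedral group that sends one generator `c` to a reflection and the other one, `d`,
to the rotation `r 1`. By Schreier's method `Γ` is generated by `d`, `e = c d c⁻¹` and `s = c²`, so
an element of `Γᵃᵇ` has the form `x = dⁱ eʲ sˡ`. If `x² = 1`, then the rotation angle, which is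
`1` on `d`, `-1` on `e` and `0` on `s`, gives `2 (i - j) = 0`, and the exponent of `t`
gives a second linear equation.

* If `n` is even, then so is `m`; take `c = a` and `d = t`, with values in the infinite dihedral
  group. The two equations say `i - j = 0` and `i + j = 0`, so `x = sˡ`. The relation reads
  `s ^ (m / 2) = s ^ (n / 2)` in `Γᵃᵇ`, and `(m - n) / 2` is odd, so `s` is a square.
* If `n` is odd, then `4 ∣ m + n`; take `c = t` and `d = a`, with values in the dihedral group of
  order 8. The two equations say that `i - j` is even and `l = 0`, so `x = aⁱ⁻ʲ (a e)ʲ`.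
  The relation reads `e ^ m = a ^ n` with `m` and `n` odd, so `a e` is a square.
-/

/-- A group is 2-avoiding if `ℤ/2` is not a direct summand of its abelianization. The encoding by
elements of order dividing two being squares is equivalent to this for finitely generated
abelianizations. -/
def IsTwoAvoiding (H : Type*) [Group H] : Prop :=
  ∀ x : Abelianization H, x ^ 2 = 1 → IsSquare x

theorem isSquare_of_isSquare_zpow {A : Type*} [CommGroup A] {x : A} {k : ℤ} (hk : Odd k)
    (hx : IsSquare (x ^ k)) : IsSquare x := by
  have heq : x = x ^ k * x ^ (1 - k) := by rw [← zpow_add, add_sub_cancel, zpow_one]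
  rw [heq]
  exact hx.mul ((odd_one.sub_odd hk).isSquare_zpow x)

theorem isSquare_of_zpow_eq_zpow {A : Type*} [CommGroup A] {x : A} {p q : ℤ}
    (hpq : Odd (p - q)) (h : x ^ p = x ^ q) : IsSquare x :=
  isSquare_of_isSquare_zpow hpq (by simp [zpow_sub, h])

theorem isSquare_mul_of_zpow_eq_zpow {A : Type*} [CommGroup A] {x y : A} {m n : ℤ}
    (hm : Odd m) (hn : Odd n) (h : y ^ m = x ^ n) : IsSquare (x * y) := by
  refine isSquare_of_isSquare_zpow hn ?_
  rw [mul_zpow, ← h, ← zpow_add]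
  exact (hm.add_odd hn).isSquare_zpow y

theorem two_nsmul_toAdd_eq_zero_of_sq_eq_one {H A : Type*} [Group H] [AddCommGroup A]
    (f : H →* Multiplicative A) {D E S : H} {i j l : ℤ}
    (h : (Abelianization.of D ^ i * Abelianization.of E ^ j * Abelianization.of S ^ l) ^ 2 = 1) :
    2 • (i • (f D).toAdd + j • (f E).toAdd + l • (f S).toAdd) = 0 := by
  simpa using congrArg Multiplicative.toAdd (congrArg (Abelianization.lift f) h)

section IndexTwo

variable {G : Type*} [Group G] {c d : G} {Γ : Subgroup G}

theorem closure_conj_sq_eq_of_index_eq_two (hG : Subgroup.closure {c, d} = ⊤) (hΓ : Γ.index = 2)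
    (hc : c ∉ Γ) (hd : d ∈ Γ) : Subgroup.closure {d, c * d * c⁻¹, c ^ 2} = Γ := by
  have he : c * d * c⁻¹ ∈ Γ := (Subgroup.normal_of_index_eq_two hΓ).conj_mem d hd c
  have hs : c ^ 2 ∈ Γ := Subgroup.sq_mem_of_index_two hΓ c
  set K := Subgroup.closure {d, c * d * c⁻¹, c ^ 2} with hK
  have hKΓ : K ≤ Γ := by simp [hK, Subgroup.closure_le, Set.insert_subset_iff, hd, he, hs]
  have hdK : d ∈ K := Subgroup.subset_closure (by simp)
  have heK : c * d * c⁻¹ ∈ K := Subgroup.subset_closure (by simp)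
  have hsK : c ^ 2 ∈ K := Subgroup.subset_closure (by simp)
  have hcover (g : G) : g ∈ K ∨ g * c⁻¹ ∈ K := by
    have hg : g ∈ Subgroup.closure {c, d} := hG ▸ Subgroup.mem_top g
    induction hg using Subgroup.closure_induction_right with
    | one => exact .inl (one_mem K)
    | mul_right g _ y hy ih =>
      obtain h | h := ih <;> obtain rfl | rfl := hy
      · exact .inr (by simpa using h)
      · exact .inl (mul_mem h hdK)
      · exact .inl (by simpa [pow_two, mul_assoc] using mul_mem h hsK)
      · exact .inr (by simpa [mul_assoc] using mul_mem h heK)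
    | mul_inv_cancel g _ y hy ih =>
      obtain h | h := ih <;> obtain rfl | rfl := hy
      · exact .inr (by simpa [pow_two, mul_assoc] using mul_mem h (inv_mem hsK))
      · exact .inl (mul_mem h (inv_mem hdK))
      · exact .inl h
      · exact .inr (by simpa [mul_assoc] using mul_mem h (inv_mem heK))
  refine le_antisymm hKΓ fun g hg => (hcover g).resolve_right fun hgc => hc ?_
  simpa using mul_mem (inv_mem (hKΓ hgc)) hg

theorem exists_eq_zpow_mul_zpow_mul_zpow_of_index_eq_two (hG : Subgroup.closure {c, d} = ⊤)
    (hΓ : Γ.index = 2) (hc : c ∉ Γ) {D E S : Γ} (hD : (D : G) = d) (hE : (E : G) = c * d * c⁻¹)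
    (hS : (S : G) = c ^ 2) (x : Abelianization Γ) :
    ∃ i j l : ℤ,
      x = Abelianization.of D ^ i * Abelianization.of E ^ j * Abelianization.of S ^ l := by
  have hΓ_gen : Subgroup.closure {D, E, S} = ⊤ := by
    apply Subgroup.map_injective Γ.subtype_injective
    rw [MonoidHom.map_closure, ← MonoidHom.range_eq_map, Subgroup.range_subtype]
    simpa only [Set.image_insert_eq, Set.image_singleton, Subgroup.subtype_apply, hD, hE, hS]
      using closure_conj_sq_eq_of_index_eq_two hG hΓ hc (hD ▸ D.2)
  have hx : x ∈ (Subgroup.closure {D, E, S}).map Abelianization.of := by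
    obtain ⟨g, rfl⟩ := QuotientGroup.mk_surjective x
    exact ⟨g, hΓ_gen ▸ Subgroup.mem_top g, rfl⟩
  rw [MonoidHom.map_closure, Set.image_insert_eq, Set.image_pair, Set.insert_eq,
    Subgroup.closure_union, ← Subgroup.zpowers_eq_closure, Subgroup.mem_sup] at hx
  obtain ⟨_, ⟨i, rfl⟩, y, hy, rfl⟩ := hx
  obtain ⟨j, l, rfl⟩ := Subgroup.mem_closure_pair.mp hy
  exact ⟨i, j, l, (mul_assoc _ _ _).symm⟩

end IndexTwo

section Rotations

open DihedralGroup

variable {G : Type*} [Group G] {N : ℕ} {φ : G →* DihedralGroup N}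

/-- The subgroup of the elements that `φ` sends to rotations. -/
def rotationPreimage (φ : G →* DihedralGroup N) : Subgroup G :=
  (Subgroup.zpowers (r 1)).comap φ

theorem mem_rotationPreimage {g : G} : g ∈ rotationPreimage φ ↔ ∃ i, φ g = r i := by
  rw [rotationPreimage, Subgroup.mem_comap, Subgroup.mem_zpowers_iff,
    ZMod.intCast_surjective.exists]
  simp only [r_one_zpow, eq_comm]

theorem notMem_rotationPreimage {g : G} {i : ZMod N} (hg : φ g = sr i) :
    g ∉ rotationPreimage φ := by
  simp [mem_rotationPreimage, hg]

theorem index_rotationPreimage {c : G} {i : ZMod N} (hc : φ c = sr i) :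
    (rotationPreimage φ).index = 2 := by
  refine Subgroup.index_eq_two_iff_exists_notMem_and.mpr
    ⟨c, notMem_rotationPreimage hc, fun g => ?_⟩
  simp only [mem_rotationPreimage, map_mul, hc]
  cases φ g <;> simp

/-- The homomorphism sending `g` to the angle `i` such that `φ g = r i`. The second branch is a
junk value: `φ g` is never a reflection. -/
def rotationAngle (φ : G →* DihedralGroup N) : rotationPreimage φ →* Multiplicative (ZMod N) where
  toFun g := Multiplicative.ofAdd <| match φ g with
    | r i => i
    | sr i => i
  map_one' := by simp [one_def, -r_zero]
  map_mul' g h := by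
    obtain ⟨i, hi⟩ := mem_rotationPreimage.mp g.2
    obtain ⟨j, hj⟩ := mem_rotationPreimage.mp h.2
    simp [hi, hj]

theorem rotationAngle_eq_ofAdd {g : rotationPreimage φ} {i : ZMod N} (hg : φ g = r i) :
    rotationAngle φ g = Multiplicative.ofAdd i := by
  simp [rotationAngle, hg]

theorem dvd_two_mul_sub_of_sq_eq_one {D E S : rotationPreimage φ} (hD : φ D = r 1)
    (hE : φ E = r (-1)) (hS : φ S = r 0) {i j l : ℤ}
    (h : (Abelianization.of D ^ i * Abelianization.of E ^ j * Abelianization.of S ^ l) ^ 2 = 1) :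
    (N : ℤ) ∣ 2 * (i - j) := by
  rw [← ZMod.intCast_zmod_eq_zero_iff_dvd]
  simpa [rotationAngle_eq_ofAdd hD, rotationAngle_eq_ofAdd hE, rotationAngle_eq_ofAdd hS, mul_add,
    sub_eq_add_neg] using two_nsmul_toAdd_eq_zero_of_sq_eq_one (rotationAngle φ) h

theorem isTwoAvoiding_rotationPreimage {c d : G} (hG : Subgroup.closure {c, d} = ⊤)
    (hc : φ c = sr 0) (hd : φ d = r 1) {D E S : rotationPreimage φ} (hD : (D : G) = d)
    (hE : (E : G) = c * d * c⁻¹) (hS : (S : G) = c ^ 2)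
    (h : ∀ i j l : ℤ, (N : ℤ) ∣ 2 * (i - j) →
      (Abelianization.of D ^ i * Abelianization.of E ^ j * Abelianization.of S ^ l) ^ 2 = 1 →
      IsSquare (Abelianization.of D ^ i * Abelianization.of E ^ j * Abelianization.of S ^ l)) :
    IsTwoAvoiding (rotationPreimage φ) := by
  intro x hx
  obtain ⟨i, j, l, rfl⟩ := exists_eq_zpow_mul_zpow_mul_zpow_of_index_eq_two hG
    (index_rotationPreimage hc) (notMem_rotationPreimage hc) hD hE hS x
  refine h i j l (dvd_two_mul_sub_of_sq_eq_one ?_ ?_ ?_ hx) hx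
  · rw [hD, hd]
  · simp [hE, hc, hd]
  · simp [hS, hc, pow_two]

end Rotations

namespace BS

open DihedralGroup

variable {m n : ℤ}

/-- The generator `a` of `B(m, n)`. -/
def a : BS m n := PresentedGroup.of 0

/-- The stable letter `t` of `B(m, n)`. -/
def t : BS m n := PresentedGroup.of 1

theorem t_mul_a_zpow_mul_t_inv : (t : BS m n) * a ^ m * t⁻¹ = a ^ n := by
  rw [← mul_inv_eq_one, ← zpow_neg]
  exact PresentedGroup.one_of_mem (Set.mem_singleton (BSRel m n))

theorem closure_a_t : Subgroup.closure {(a : BS m n), t} = ⊤ := by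
  rw [← PresentedGroup.closure_range_of]
  congr 1
  ext x
  simp [Fin.exists_fin_two, a, t, eq_comm]

section Lift

variable {H : Type*} [Group H] (x y : H) (h : y * x ^ m * y⁻¹ = x ^ n)

/-- The homomorphism from `B(m, n)` that sends `a` to `x` and `t` to `y`. -/
def lift : BS m n →* H :=
  PresentedGroup.toGroup (f := ![x, y]) (by
    rintro r rfl
    simp [BSRel, h])

@[simp]
theorem lift_a : lift x y h a = x :=
  PresentedGroup.toGroup.of _

@[simp]
theorem lift_t : lift x y h t = y :=
  PresentedGroup.toGroup.of _

end Lift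

/-- The exponent sum of `t`, as a homomorphism from `B(m, n)` to `ℤ`. -/
def stableExponent (m n : ℤ) : BS m n →* Multiplicative ℤ :=
  lift 1 (Multiplicative.ofAdd 1) (by simp)

theorem exists_isTwoAvoiding_of_even {p q : ℤ} (hpq : Odd (p - q)) :
    ∃ Γ : Subgroup (BS (2 * p) (2 * q)), Γ.index = 2 ∧ IsTwoAvoiding Γ := by
  let φ : BS (2 * p) (2 * q) →* DihedralGroup 0 := lift (sr 0) (r 1) (by
    simp [zpow_mul, pow_two])
  have hφa : φ a = sr 0 := lift_a ..
  have hφt : φ t = r 1 := lift_t ..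
  let T : rotationPreimage φ := ⟨t, mem_rotationPreimage.mpr ⟨_, hφt⟩⟩
  let U : rotationPreimage φ := ⟨a * t * a⁻¹, by simp [mem_rotationPreimage, hφa, hφt]⟩
  let S : rotationPreimage φ := ⟨a ^ 2, Subgroup.sq_mem_of_index_two (index_rotationPreimage hφa) a⟩
  refine ⟨rotationPreimage φ, index_rotationPreimage hφa,
    isTwoAvoiding_rotationPreimage (D := T) (E := U) (S := S) closure_a_t hφa hφt rfl rfl rfl
      fun i j l hsub hx => ?_⟩
  have hrel : T * S ^ p * T⁻¹ = S ^ q := Subtype.ext <| by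
    simpa [T, S, zpow_mul, zpow_ofNat] using t_mul_a_zpow_mul_t_inv (m := 2 * p) (n := 2 * q)
  have hS : IsSquare (Abelianization.of S) :=
    isSquare_of_zpow_eq_zpow hpq (by simpa using congrArg Abelianization.of hrel)
  have hadd : i + j = 0 := by
    simpa [T, U, S, stableExponent] using two_nsmul_toAdd_eq_zero_of_sq_eq_one
      ((stableExponent _ _).comp (rotationPreimage φ).subtype) hx
  obtain rfl : i = 0 := by lia
  obtain rfl : j = 0 := by lia
  simpa using hS.zpow l

theorem exists_isTwoAvoiding_of_odd (hm : Odd m) (hn : Odd n) (hmn : 4 ∣ m + n) :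
    ∃ Γ : Subgroup (BS m n), Γ.index = 2 ∧ IsTwoAvoiding Γ := by
  have hcast : (m + n : ZMod 4) = 0 := by
    exact_mod_cast (ZMod.intCast_zmod_eq_zero_iff_dvd (m + n) 4).mpr hmn
  let φ : BS m n →* DihedralGroup 4 := lift (r 1) (sr 0) (by
    simpa [neg_eq_iff_add_eq_zero] using hcast)
  have hφa : φ a = r 1 := lift_a ..
  have hφt : φ t = sr 0 := lift_t ..
  let A : rotationPreimage φ := ⟨a, mem_rotationPreimage.mpr ⟨_, hφa⟩⟩
  let B : rotationPreimage φ := ⟨t * a * t⁻¹, by simp [mem_rotationPreimage, hφa, hφt]⟩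
  let S : rotationPreimage φ := ⟨t ^ 2, Subgroup.sq_mem_of_index_two (index_rotationPreimage hφt) t⟩
  refine ⟨rotationPreimage φ, index_rotationPreimage hφt,
    isTwoAvoiding_rotationPreimage (D := A) (E := B) (S := S) (Set.pair_comm a t ▸ closure_a_t)
      hφt hφa rfl rfl rfl fun i j l hsub hx => ?_⟩
  have hrel : B ^ m = A ^ n := Subtype.ext <| by
    simpa [A, B, conj_zpow] using t_mul_a_zpow_mul_t_inv (m := m) (n := n)
  have hAB : IsSquare (Abelianization.of A * Abelianization.of B) :=
    isSquare_mul_of_zpow_eq_zpow hm hn (by simpa using congrArg Abelianization.of hrel)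
  obtain rfl : l = 0 := by
    simpa [A, B, S, stableExponent] using two_nsmul_toAdd_eq_zero_of_sq_eq_one
      ((stableExponent _ _).comp (rotationPreimage φ).subtype) hx
  have hij : Even (i - j) := by grind
  have heq : Abelianization.of A ^ i * Abelianization.of B ^ j * Abelianization.of S ^ (0 : ℤ) =
      Abelianization.of A ^ (i - j) * (Abelianization.of A * Abelianization.of B) ^ j := by
    rw [mul_zpow, ← mul_assoc, ← zpow_add, sub_add_cancel, zpow_zero, mul_one]
  rw [heq]
  exact (hij.isSquare_zpow _).mul (hAB.zpow j)

end BS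

theorem stmt_7_general {m n : ℤ} (h : m ≡ n + 2 [ZMOD 4]) :
    ∃ Γ : Subgroup (BS m n), Γ.index = 2 ∧ IsTwoAvoiding Γ := by
  have hdvd := h.dvd
  obtain hn | hn := n.even_or_odd
  · obtain ⟨q, rfl⟩ := hn.two_dvd
    obtain ⟨p, rfl⟩ : 2 ∣ m := by lia
    exact BS.exists_isTwoAvoiding_of_even (by grind)
  · exact BS.exists_isTwoAvoiding_of_odd (by grind) hn (by grind)

theorem stmt_7 (n : ℤ) :
    ∃ Γ' : Subgroup (BS (n + 2) n), Γ'.index = 2 ∧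
      ∀ x : Abelianization ↥Γ', x ^ 2 = 1 → ∃ y : Abelianization ↥Γ', x = y ^ 2 := by
  obtain ⟨Γ, hindex, hΓ⟩ := stmt_7_general (Int.ModEq.refl (n + 2))
  exact ⟨Γ, hindex, fun x hx => (hΓ x hx).exists_sq⟩
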